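/- Newman's value for Υ³ at π/2: −∫₀^{π/2} (π/2 − t) · log(sin t) dt = (π²/8) · log 2 + (7/16) · ζ(3). -/

import Mathlib

open Real MeasureTheory

/-- The Riemann zeta value `ζ k = ∑_{m ≥ 1} 1 / m ^ k`. -/
noncomputable def zetaVal (k : ℕ) : ℝ := ∑' m : ℕ+, 1 / (m : ℝ) ^ k

/-!
The Fourier series `-log |2 sin t| = ∑_{n ≥ 1} cos (2 n t) / n` is only conditionally convergent, so
it is integrated against `π / 2 - t` after Abel summation: for `0 ≤ r < 1` the factors `r ^ n` make
termwise integration legitimate, and `r → 1⁻` is justified by dominated convergence on the integral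
side and by Abel's limit theorem on the series side. The coefficients of `π / 2 - t` vanish for even
`n` and are `1 / (2 n ^ 2)` for odd `n`, which leaves half of `∑_{n odd} 1 / n ^ 3 = 7 / 8 * ζ(3)`;
replacing `2 sin t` by `sin t` accounts for the term with `log 2`.

Sums over `n ≥ 1` are written over all of `ℕ`: the terms at `n = 0` vanish because `x / 0 = 0`.
Absolute values inside `log` are omitted, since `Real.log x = Real.log |x|`.
-/

open Filter Topology

section AbelMean

variable {r t : ℝ}

theorem hasSum_pow_mul_cos_div (hr : |r| < 1) (θ : ℝ) :
    HasSum (fun n : ℕ ↦ r ^ n * cos (n * θ) / n) (-(log (1 - 2 * r * cos θ + r ^ 2) / 2)) := by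
  set z : ℂ := r * Complex.exp (θ * Complex.I) with hz
  have norm_z : ‖z‖ < 1 := by
    rwa [hz, norm_mul, Complex.norm_exp_ofReal_mul_I, mul_one, Complex.norm_real]
  have re_term (n : ℕ) : (z ^ n / n).re = r ^ n * cos (n * θ) / n := by
    have hzn : z ^ n = (r ^ n : ℝ) * Complex.exp ((n * θ : ℝ) * Complex.I) := by
      rw [hz, mul_pow, ← Complex.exp_nat_mul]
      push_cast
      ring_nf
    rw [hzn, Complex.div_natCast_re, Complex.re_ofReal_mul, Complex.exp_ofReal_mul_I_re]
  have norm_sq : ‖1 - z‖ ^ 2 = 1 - 2 * r * cos θ + r ^ 2 := by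
    rw [← Complex.normSq_eq_norm_sq, Complex.normSq_apply, Complex.sub_re, Complex.sub_im, hz,
      Complex.re_ofReal_mul, Complex.im_ofReal_mul, Complex.exp_ofReal_mul_I_re,
      Complex.exp_ofReal_mul_I_im, Complex.one_re, Complex.one_im]
    linear_combination r ^ 2 * sin_sq_add_cos_sq θ
  have re_log : (-Complex.log (1 - z)).re = -(log (1 - 2 * r * cos θ + r ^ 2) / 2) := by
    rw [Complex.neg_re, Complex.log_re, ← norm_sq, log_pow]
    push_cast
    ring
  simpa only [re_term, re_log] using
    Complex.hasSum_re (Complex.hasSum_taylorSeries_neg_log norm_z)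

/-- The Abel mean at radius `r` of `log |2 sin t| = -∑_{n ≥ 1} cos (2 n t) / n`, that is
`log ‖1 - r * exp (2 i t)‖`; the square of that norm is the argument of the logarithm. -/
noncomputable def logSinAbelMean (r t : ℝ) : ℝ := log ((1 - r) ^ 2 + 4 * r * sin t ^ 2) / 2

theorem measurable_logSinAbelMean (r : ℝ) : Measurable (logSinAbelMean r) := by
  unfold logSinAbelMean
  fun_prop

theorem logSinAbelMean_one (t : ℝ) : logSinAbelMean 1 t = log (2 * sin t) := by
  have h : (1 - 1) ^ 2 + 4 * 1 * sin t ^ 2 = (2 * sin t) ^ 2 := by ring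
  rw [logSinAbelMean, h, log_pow]
  push_cast
  ring

theorem hasSum_logSinAbelMean (hr : |r| < 1) (t : ℝ) :
    HasSum (fun n : ℕ ↦ r ^ n * cos (2 * n * t) / n) (-logSinAbelMean r t) := by
  have norm_sq : 1 - 2 * r * cos (2 * t) + r ^ 2 = (1 - r) ^ 2 + 4 * r * sin t ^ 2 := by
    rw [cos_two_mul, cos_sq']
    ring
  have angle (n : ℕ) : (n : ℝ) * (2 * t) = 2 * n * t := by ring
  simpa only [logSinAbelMean, norm_sq, angle] using hasSum_pow_mul_cos_div hr (2 * t)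

theorem continuousAt_logSinAbelMean_one (ht : sin t ≠ 0) :
    ContinuousAt (fun r ↦ logSinAbelMean r t) 1 := by
  have h : (1 - 1) ^ 2 + 4 * 1 * sin t ^ 2 ≠ 0 := by simpa using ht
  have hcont : ContinuousAt (fun r : ℝ ↦ (1 - r) ^ 2 + 4 * r * sin t ^ 2) 1 := by fun_prop
  exact (hcont.log h).div_const 2

theorem abs_logSinAbelMean_le (hr : r ∈ Set.Icc (1 / 4) 1) (ht : sin t ≠ 0) :
    |logSinAbelMean r t| ≤ log 2 + |log (sin t)| := by
  have sin_sq_pos : 0 < sin t ^ 2 := by positivity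
  have lower : sin t ^ 2 ≤ (1 - r) ^ 2 + 4 * r * sin t ^ 2 := by
    nlinarith [hr.1, sq_nonneg (1 - r)]
  have upper : (1 - r) ^ 2 + 4 * r * sin t ^ 2 ≤ 2 ^ 2 := by
    nlinarith [hr.1, hr.2, sin_sq_le_one t]
  have log_lower := log_le_log sin_sq_pos lower
  have log_upper := log_le_log (sin_sq_pos.trans_le lower) upper
  rw [log_pow, Nat.cast_two] at log_lower log_upper
  have log_two_pos : 0 < log 2 := log_pos one_lt_two
  rw [logSinAbelMean, abs_le]
  constructor <;> linarith [neg_abs_le (log (sin t)), abs_nonneg (log (sin t))]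

end AbelMean

theorem ae_sin_ne_zero : ∀ᵐ t : ℝ, sin t ≠ 0 := by
  have zeros : {t : ℝ | sin t = 0} = Set.range fun n : ℤ ↦ n * π :=
    Set.ext fun _ ↦ sin_eq_zero_iff
  exact (zeros ▸ Set.countable_range _).ae_notMem volume

section FourierPairing

variable {g : ℝ → ℝ} {a b r : ℝ}

theorem intervalIntegrable_mul_log_sin (hg : ContinuousOn g (Set.uIcc a b)) :
    IntervalIntegrable (fun t ↦ g t * log (sin t)) volume a b :=
  IntervalIntegrable.continuousOn_mul (f := fun t ↦ log (sin t)) intervalIntegrable_log_sin hg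

theorem integral_mul_log_two_mul_sin (hg : IntervalIntegrable g volume a b)
    (hg_log : IntervalIntegrable (fun t ↦ g t * log (sin t)) volume a b) :
    ∫ t in a..b, g t * log (2 * sin t) =
      (∫ t in a..b, g t) * log 2 + ∫ t in a..b, g t * log (sin t) := by
  rw [← intervalIntegral.integral_mul_const,
    ← intervalIntegral.integral_add (hg.mul_const _) hg_log]
  refine intervalIntegral.integral_congr_ae ?_
  filter_upwards [ae_sin_ne_zero] with t ht _
  rw [log_mul two_ne_zero ht, mul_add]

theorem hasSum_integral_mul_logSinAbelMean (hg : IntervalIntegrable g volume a b) (hr : |r| < 1) :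
    HasSum (fun n : ℕ ↦ (∫ t in a..b, g t * cos (2 * n * t)) / n * r ^ n)
      (-∫ t in a..b, g t * logSinAbelMean r t) := by
  have term_eq (n : ℕ) : (∫ t in a..b, g t * cos (2 * n * t)) / n * r ^ n =
      ∫ t in a..b, g t * (r ^ n * cos (2 * n * t) / n) := by
    rw [← intervalIntegral.integral_div, ← intervalIntegral.integral_mul_const]
    congr 1 with t
    ring
  have term_le (n : ℕ) (t : ℝ) : ‖g t * (r ^ n * cos (2 * n * t) / n)‖ ≤ ‖g t‖ * |r| ^ n := by
    have cos_term_le : |r| ^ n * |cos (2 * n * t)| / n ≤ |r| ^ n :=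
      (div_nat_le_self_of_nonnneg (by positivity) n).trans
        (mul_le_of_le_one_right (by positivity) (abs_cos_le_one _))
    simp only [norm_eq_abs, abs_mul, abs_div, abs_pow, Nat.abs_cast]
    gcongr
  simp only [term_eq, ← intervalIntegral.integral_neg, ← mul_neg]
  refine intervalIntegral.hasSum_integral_of_dominated_convergence (fun n t ↦ ‖g t‖ * |r| ^ n)
    (fun n ↦ hg.aestronglyMeasurable_restrict_uIoc.mul
      (Continuous.aestronglyMeasurable (by fun_prop)))
    (fun n ↦ .of_forall fun t _ ↦ term_le n t)
    (.of_forall fun t _ ↦ (summable_geometric_of_lt_one (abs_nonneg r) hr).mul_left _) ?_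
    (.of_forall fun t _ ↦ (hasSum_logSinAbelMean hr t).mul_left _)
  simpa only [tsum_mul_left] using hg.norm.mul_const _

theorem tendsto_integral_mul_logSinAbelMean (hg : IntervalIntegrable g volume a b)
    (hg_log : IntervalIntegrable (fun t ↦ g t * log (sin t)) volume a b) :
    Tendsto (fun r ↦ ∫ t in a..b, g t * logSinAbelMean r t) (𝓝[<] 1)
      (𝓝 (∫ t in a..b, g t * log (2 * sin t))) := by
  refine intervalIntegral.tendsto_integral_filter_of_dominated_convergence
    (fun t ↦ ‖g t‖ * log 2 + ‖g t * log (sin t)‖) ?_ ?_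
    ((hg.norm.mul_const _).add hg_log.norm) ?_
  · exact .of_forall fun r ↦ hg.aestronglyMeasurable_restrict_uIoc.mul
      (measurable_logSinAbelMean r).aestronglyMeasurable
  · filter_upwards [Ioo_mem_nhdsLT (show (1 / 4 : ℝ) < 1 by norm_num)] with r hr
    filter_upwards [ae_sin_ne_zero] with t ht _
    rw [norm_mul, norm_mul, ← mul_add]
    gcongr
    exact abs_logSinAbelMean_le (Set.Ioo_subset_Icc_self hr) ht
  · filter_upwards [ae_sin_ne_zero] with t ht _
    rw [← logSinAbelMean_one]
    exact ((continuousAt_logSinAbelMean_one ht).tendsto.mono_left nhdsWithin_le_nhds).const_mul _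

theorem hasSum_integral_mul_cos_div (hg : IntervalIntegrable g volume a b)
    (hg_log : IntervalIntegrable (fun t ↦ g t * log (sin t)) volume a b)
    (hg_sum : Summable fun n : ℕ ↦ (∫ t in a..b, g t * cos (2 * n * t)) / n) :
    HasSum (fun n : ℕ ↦ (∫ t in a..b, g t * cos (2 * n * t)) / n)
      (-∫ t in a..b, g t * log (2 * sin t)) := by
  have abel := Real.tendsto_tsum_powerSeries_nhdsWithin_lt hg_sum.hasSum.tendsto_sum_nat
  have lim := (tendsto_integral_mul_logSinAbelMean hg hg_log).neg
  have means_eq : (fun r ↦ -∫ t in a..b, g t * logSinAbelMean r t) =ᶠ[𝓝[<] 1]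
      fun r ↦ ∑' n : ℕ, (∫ t in a..b, g t * cos (2 * n * t)) / n * r ^ n := by
    filter_upwards [Ioo_mem_nhdsLT (show (-1 : ℝ) < 1 by norm_num)] with r hr
    exact (hasSum_integral_mul_logSinAbelMean hg (abs_lt.mpr hr)).tsum_eq.symm
  rw [tendsto_nhds_unique (lim.congr' means_eq) abel]
  exact hg_sum.hasSum

end FourierPairing

theorem integral_sub_mul_cos (b : ℝ) {c : ℝ} (hc : c ≠ 0) :
    ∫ t in (0 : ℝ)..b, (b - t) * cos (c * t) = (1 - cos (c * b)) / c ^ 2 := by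
  have deriv_eq (t : ℝ) : HasDerivAt (fun t ↦ (b - t) * sin (c * t) / c - cos (c * t) / c ^ 2)
      ((b - t) * cos (c * t)) t := by
    have hct : HasDerivAt (fun t ↦ c * t) c t := by simpa using (hasDerivAt_id t).const_mul c
    refine (((((hasDerivAt_id t).const_sub b).mul hct.sin).div_const c).sub
      (hct.cos.div_const (c ^ 2))).congr_deriv ?_
    simp only [id]
    field_simp
    ring
  rw [intervalIntegral.integral_eq_sub_of_hasDerivAt (fun t _ ↦ deriv_eq t)
    (Continuous.intervalIntegrable (by fun_prop) _ _)]
  simp only [sub_self, zero_mul, mul_zero, zero_div, sin_zero, cos_zero]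
  ring

theorem integral_pi_div_two_sub_mul_cos_div (n : ℕ) :
    (∫ t in (0 : ℝ)..(π / 2), (π / 2 - t) * cos (2 * n * t)) / n =
      1 / 4 * ((1 - (-1) ^ n) / (n : ℝ) ^ 3) := by
  rcases eq_or_ne n 0 with rfl | hn
  · simp
  have angle : 2 * n * (π / 2) = n * π := by ring
  rw [integral_sub_mul_cos _ (by positivity), angle, cos_nat_mul_pi]
  field_simp
  ring

section ZetaVal

variable {k : ℕ}

theorem hasSum_zetaVal (hk : 1 < k) : HasSum (fun n : ℕ ↦ 1 / (n : ℝ) ^ k) (zetaVal k) := by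
  have zero_term : 1 / ((0 : ℕ) : ℝ) ^ k = 0 := by simp [show k ≠ 0 by omega]
  rw [zetaVal, tsum_pnat_eq_tsum_of_eq_zero (f := fun n : ℕ ↦ 1 / (n : ℝ) ^ k) zero_term]
  exact (Real.summable_one_div_nat_pow.mpr hk).hasSum

theorem hasSum_one_div_even_pow (hk : 1 < k) :
    HasSum (fun n : ℕ ↦ 1 / ((2 * n : ℕ) : ℝ) ^ k) (1 / 2 ^ k * zetaVal k) := by
  have term_eq (n : ℕ) : 1 / ((2 * n : ℕ) : ℝ) ^ k = 1 / 2 ^ k * (1 / (n : ℝ) ^ k) := by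
    rw [Nat.cast_mul, Nat.cast_two, mul_pow, one_div_mul_one_div]
  simpa only [term_eq] using (hasSum_zetaVal hk).mul_left (1 / 2 ^ k)

theorem hasSum_one_div_odd_pow (hk : 1 < k) :
    HasSum (fun n : ℕ ↦ 1 / ((2 * n + 1 : ℕ) : ℝ) ^ k) ((1 - 1 / 2 ^ k) * zetaVal k) := by
  have odd : Summable fun n : ℕ ↦ 1 / ((2 * n + 1 : ℕ) : ℝ) ^ k :=
    (hasSum_zetaVal hk).summable.comp_injective (i := fun n ↦ 2 * n + 1)
      fun m n h ↦ by simpa using h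
  have split : 1 / 2 ^ k * zetaVal k + ∑' n : ℕ, 1 / ((2 * n + 1 : ℕ) : ℝ) ^ k = zetaVal k :=
    ((hasSum_one_div_even_pow hk).even_add_odd (f := fun n : ℕ ↦ 1 / (n : ℝ) ^ k)
      odd.hasSum).unique (hasSum_zetaVal hk)
  rw [odd.hasSum_iff]
  linear_combination split

theorem hasSum_one_sub_neg_one_pow_div_pow (hk : 1 < k) :
    HasSum (fun n : ℕ ↦ (1 - (-1) ^ n) / (n : ℝ) ^ k) (2 * (1 - 1 / 2 ^ k) * zetaVal k) := by
  have even (n : ℕ) : (1 - (-1) ^ (2 * n)) / ((2 * n : ℕ) : ℝ) ^ k = 0 := by simp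
  have odd (n : ℕ) : (1 - (-1) ^ (2 * n + 1)) / ((2 * n + 1 : ℕ) : ℝ) ^ k =
      2 * (1 / ((2 * n + 1 : ℕ) : ℝ) ^ k) := by
    rw [(odd_two_mul_add_one n).neg_one_pow]
    ring
  have h := HasSum.even_add_odd (f := fun n : ℕ ↦ (1 - (-1) ^ n) / (n : ℝ) ^ k) (m := 0)
    (by simpa only [even] using hasSum_zero)
    (by simpa only [odd] using (hasSum_one_div_odd_pow hk).mul_left 2)
  rwa [zero_add, ← mul_assoc] at h

end ZetaVal

theorem integral_pi_div_two_sub_mul_log_two_mul_sin :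
    -∫ t in (0 : ℝ)..(π / 2), (π / 2 - t) * log (2 * sin t) = 7 / 16 * zetaVal 3 := by
  have series : HasSum (fun n : ℕ ↦
      (∫ t in (0 : ℝ)..(π / 2), (π / 2 - t) * cos (2 * n * t)) / n) (7 / 16 * zetaVal 3) := by
    simp only [integral_pi_div_two_sub_mul_cos_div]
    have value : 7 / 16 * zetaVal 3 = 1 / 4 * (2 * (1 - 1 / 2 ^ 3) * zetaVal 3) := by ring
    exact value ▸ (hasSum_one_sub_neg_one_pow_div_pow (by norm_num)).mul_left (1 / 4)
  have hg : Continuous fun t : ℝ ↦ π / 2 - t := by fun_prop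
  exact (hasSum_integral_mul_cos_div (hg.intervalIntegrable _ _)
    (intervalIntegrable_mul_log_sin hg.continuousOn) series.summable).unique series

theorem upsilon_three_at_pi_div_two :
    -∫ t in (0:ℝ)..(π / 2), (π / 2 - t) * Real.log (Real.sin t) =
      π ^ 2 / 8 * Real.log 2 + 7 / 16 * zetaVal 3 := by
  have weight : ∫ t in (0 : ℝ)..(π / 2), (π / 2 - t) = π ^ 2 / 8 := by
    rw [intervalIntegral.integral_comp_sub_left fun t ↦ t, integral_id]
    ring
  have hg : Continuous fun t : ℝ ↦ π / 2 - t := by fun_prop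
  have split := integral_mul_log_two_mul_sin (hg.intervalIntegrable 0 (π / 2))
    (intervalIntegrable_mul_log_sin hg.continuousOn)
  linear_combination integral_pi_div_two_sub_mul_log_two_mul_sin + split + log 2 * weight
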